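/- arXiv:2005.01551 — 2 statements merged into one kernel-verified Lean document; each statement's English description precedes it below -/
import Mathlib

section
/- Porosity of the free boundary: Let Ω ⊂ ℝⁿ be open and let f : [0,∞) → ℝ be continuous, non-decreasing, and satisfy both condition (1.2) with constants M > 0, γ ∈ [0,3) and condition (5.1) with constants N > 0 and the same γ. Let u ∈ C(Ω) be a bounded non-negative viscosity solution of Δ∞u = f(u) in Ω. Then for every open set Ω′ compactly contained in Ω there exists σ ∈ (0,1) such that the set ∂{u > 0} ∩ Ω′ is porous with porosity σ. -/
open Set Metric Filter MeasureTheory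

/-- The infinity Laplacian of a (C²) function `φ` at `x`:
`Δ∞φ(x) = Σ_{i,j} ∂_iφ(x) ∂_jφ(x) ∂_{ij}φ(x)`. -/
noncomputable def infLap {n : ℕ} (φ : EuclideanSpace ℝ (Fin n) → ℝ)
    (x : EuclideanSpace ℝ (Fin n)) : ℝ :=
  ∑ i : Fin n, ∑ j : Fin n,
    fderiv ℝ φ x (EuclideanSpace.single i 1) * fderiv ℝ φ x (EuclideanSpace.single j 1) *
      fderiv ℝ (fun y => fderiv ℝ φ y (EuclideanSpace.single i 1)) x (EuclideanSpace.single j 1)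

/-- `u` is a viscosity supersolution of `Δ∞u = F(x, u(x))` in `Ω`. -/
def IsViscSupersol {n : ℕ} (Ω : Set (EuclideanSpace ℝ (Fin n)))
    (u : EuclideanSpace ℝ (Fin n) → ℝ)
    (F : EuclideanSpace ℝ (Fin n) → ℝ → ℝ) : Prop :=
  ∀ φ : EuclideanSpace ℝ (Fin n) → ℝ, ContDiff ℝ 2 φ →
    ∀ x₀ ∈ Ω, φ x₀ = u x₀ → IsLocalMin (fun x => u x - φ x) x₀ →
      infLap φ x₀ ≤ F x₀ (φ x₀)

/-- `u` is a viscosity subsolution of `Δ∞u = F(x, u(x))` in `Ω`. -/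
def IsViscSubsol {n : ℕ} (Ω : Set (EuclideanSpace ℝ (Fin n)))
    (u : EuclideanSpace ℝ (Fin n) → ℝ)
    (F : EuclideanSpace ℝ (Fin n) → ℝ → ℝ) : Prop :=
  ∀ φ : EuclideanSpace ℝ (Fin n) → ℝ, ContDiff ℝ 2 φ →
    ∀ x₀ ∈ Ω, φ x₀ = u x₀ → IsLocalMax (fun x => u x - φ x) x₀ →
      F x₀ (φ x₀) ≤ infLap φ x₀

/-- `u` is a viscosity solution of `Δ∞u = F(x, u(x))` in `Ω`. -/
def IsViscSol {n : ℕ} (Ω : Set (EuclideanSpace ℝ (Fin n)))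
    (u : EuclideanSpace ℝ (Fin n) → ℝ)
    (F : EuclideanSpace ℝ (Fin n) → ℝ → ℝ) : Prop :=
  IsViscSupersol Ω u F ∧ IsViscSubsol Ω u F

/-- Condition (1.2): for every `T > 0` there is `δ₀ > 0` such that
`0 ≤ f(δt) ≤ M δ^γ f(t)` for all `0 < t ≤ T` and `0 < δ ≤ δ₀`. -/
def Cond12 (f : ℝ → ℝ) (M γ : ℝ) : Prop :=
  ∀ T > 0, ∃ δ₀ > 0, ∀ t : ℝ, 0 < t → t ≤ T → ∀ δ : ℝ, 0 < δ → δ ≤ δ₀ →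
    0 ≤ f (δ * t) ∧ f (δ * t) ≤ M * δ ^ γ * f t

/-- Condition (5.1): for every `T > 0` there is `δ₀ > 0` such that
`f(δt) ≥ N δ^γ f(t) ≥ 0` for all `0 < t ≤ T` and `0 < δ ≤ δ₀`. -/
def Cond51 (f : ℝ → ℝ) (N γ : ℝ) : Prop :=
  ∀ T > 0, ∃ δ₀ > 0, ∀ t : ℝ, 0 < t → t ≤ T → ∀ δ : ℝ, 0 < δ → δ ≤ δ₀ →
    N * δ ^ γ * f t ≤ f (δ * t) ∧ 0 ≤ N * δ ^ γ * f t

/-- `E` is porous with porosity `σ`. -/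
def IsPorousWith {n : ℕ} (E : Set (EuclideanSpace ℝ (Fin n))) (σ : ℝ) : Prop :=
  ∃ R > (0 : ℝ), ∀ x ∈ E, ∀ r : ℝ, 0 < r → r < R →
    ∃ y : EuclideanSpace ℝ (Fin n), ball y (σ * r) ⊆ ball x r \ E

lemma infLap_congr {n : ℕ} {φ ψ : EuclideanSpace ℝ (Fin n) → ℝ} {x : EuclideanSpace ℝ (Fin n)}
    (h : φ =ᶠ[nhds x] ψ) : infLap φ x = infLap ψ x := by
  unfold infLap
  have h1 : fderiv ℝ φ =ᶠ[nhds x] fderiv ℝ ψ := h.fderiv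
  have h2 : ∀ i : Fin n, (fun y => fderiv ℝ φ y (EuclideanSpace.single i 1)) =ᶠ[nhds x]
      (fun y => fderiv ℝ ψ y (EuclideanSpace.single i 1)) := by
    intro i
    filter_upwards [h1] with y hy
    rw [hy]
  refine Finset.sum_congr rfl fun i _ => Finset.sum_congr rfl fun j _ => ?_
  rw [h.fderiv_eq, (h2 i).fderiv_eq]

lemma exists_global {n : ℕ} {φ : EuclideanSpace ℝ (Fin n) → ℝ} {x : EuclideanSpace ℝ (Fin n)}
    (h : ContDiffAt ℝ 2 φ x) :
    ∃ ψ : EuclideanSpace ℝ (Fin n) → ℝ, ContDiff ℝ 2 ψ ∧ φ =ᶠ[nhds x] ψ := by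
  have h1 : ∀ᶠ y in nhds x, ContDiffAt ℝ 2 φ y := h.eventually (by simp)
  obtain ⟨ε, hε, hb⟩ := Metric.eventually_nhds_iff_ball.1 h1
  let b : ContDiffBump x := ⟨ε/4, ε/2, by positivity, by linarith⟩
  refine ⟨fun y => b y * φ y, ?_, ?_⟩
  · rw [contDiff_iff_contDiffAt]
    intro y
    by_cases hy : y ∈ tsupport (fun y => b y * φ y)
    swap
    · exact contDiffAt_const.congr_of_eventuallyEq (notMem_tsupport_iff_eventuallyEq.1 hy)
    have hy2 : y ∈ tsupport b := tsupport_mul_subset_left hy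
    rw [b.tsupport_eq] at hy2
    have : y ∈ ball x ε := by
      have : dist y x ≤ ε/2 := hy2
      rw [mem_ball]; linarith
    exact (b.contDiffAt).mul (hb y this)
  · filter_upwards [b.eventuallyEq_one] with y hy
    simp [hy]

lemma IsViscSupersol.loc {n : ℕ} {Ω : Set (EuclideanSpace ℝ (Fin n))}
    {u : EuclideanSpace ℝ (Fin n) → ℝ} {F} (hs : IsViscSupersol Ω u F)
    {φ : EuclideanSpace ℝ (Fin n) → ℝ} {x₀ : EuclideanSpace ℝ (Fin n)} (hx : x₀ ∈ Ω)
    (hφ : ContDiffAt ℝ 2 φ x₀) (he : φ x₀ = u x₀)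
    (hm : IsLocalMin (fun x => u x - φ x) x₀) : infLap φ x₀ ≤ F x₀ (u x₀) := by
  obtain ⟨ψ, h1, h2⟩ := exists_global hφ
  rw [infLap_congr h2, ← he, h2.eq_of_nhds]
  refine hs ψ h1 x₀ hx (h2.eq_of_nhds ▸ he) ?_
  refine IsLocalMin.congr hm ?_
  filter_upwards [h2] with y hy
  rw [hy]

lemma infLap_radial {n : ℕ} (y x : EuclideanSpace ℝ (Fin n)) (h h1 : ℝ → ℝ) (h2 : ℝ)
    (hh : ∀ᶠ t in nhds (‖x - y‖^2), HasDerivAt h (h1 t) t)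
    (hh1 : HasDerivAt h1 h2 (‖x - y‖^2)) :
    infLap (fun z => h (‖z - y‖^2)) x =
      8 * ‖x - y‖^2 * h1 (‖x-y‖^2)^2 * (h1 (‖x-y‖^2) + 2 * ‖x-y‖^2 * h2) := by
  have hN : ∀ z : EuclideanSpace ℝ (Fin n), HasFDerivAt (fun z => ‖z - y‖^2)
      ((2:ℝ) • (innerSL ℝ (z - y))) z := by
    intro z
    have := ((hasFDerivAt_id z).sub_const y).norm_sq
    have h2 : (2:ℝ) • (innerSL ℝ (z - y)) = 2 • ((innerSL ℝ (id z - y)).comp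
        (ContinuousLinearMap.id ℝ (EuclideanSpace ℝ (Fin n)))) := by
      ext v
      simp
    rw [h2]
    exact this
  have hc : Filter.Tendsto (fun z => ‖z - y‖^2) (nhds x) (nhds (‖x - y‖^2)) :=
    (hN x).continuousAt
  have e1 : ∀ᶠ z in nhds x, ∀ i, fderiv ℝ (fun z => h (‖z - y‖^2)) z (EuclideanSpace.single i 1)
      = h1 (‖z - y‖^2) * (2 * (z i - y i)) := by
    filter_upwards [hc.eventually hh] with z hz i
    have := (hz.comp_hasFDerivAt z (hN z)).fderiv
    change fderiv ℝ (fun z => h (‖z - y‖^2)) z = _ at this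
    rw [this]
    simp [EuclideanSpace.inner_single_right]
  have e2 : ∀ i j, fderiv ℝ (fun z => fderiv ℝ (fun z => h (‖z - y‖^2)) z
      (EuclideanSpace.single i 1)) x (EuclideanSpace.single j 1) =
      4 * h2 * (x i - y i) * (x j - y j) + 2 * h1 (‖x - y‖^2) * (if i = j then 1 else 0) := by
    intro i j
    have e3 : (fun z => fderiv ℝ (fun z => h (‖z - y‖^2)) z (EuclideanSpace.single i 1)) =ᶠ[nhds x]
      (fun z => h1 (‖z - y‖^2) * (2 * (z i - y i))) := by
      filter_upwards [e1] with z hz using hz i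
    rw [e3.fderiv_eq]
    have p1 := hh1.comp_hasFDerivAt x (hN x)
    have p2 : HasFDerivAt (fun z : EuclideanSpace ℝ (Fin n) => 2 * (z i - y i))
        ((2:ℝ) • (EuclideanSpace.proj i : EuclideanSpace ℝ (Fin n) →L[ℝ] ℝ)) x :=
      (((EuclideanSpace.proj i : EuclideanSpace ℝ (Fin n) →L[ℝ] ℝ).hasFDerivAt).sub_const
        (y i)).const_mul 2
    have p3 := (p1.mul p2).fderiv
    change fderiv ℝ (fun z => h1 (‖z - y‖^2) * (2 * (z i - y i))) x = _ at p3
    rw [p3]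
    simp [EuclideanSpace.inner_single_right, PiLp.single_apply]
    split_ifs <;> ring
  have hs : ‖x - y‖^2 = ∑ i, (x i - y i)^2 := by
    simp [EuclideanSpace.real_norm_sq_eq]
  unfold infLap
  simp only [e1.self_of_nhds, e2]
  set ρ := ‖x-y‖^2
  set a := h1 ρ
  have : ∀ i j, a * (2 * (x i - y i)) * (a * (2 * (x j - y j))) *
      (4 * h2 * (x i - y i) * (x j - y j) + 2 * a * (if i = j then 1 else 0)) =
      16 * a^2 * h2 * (x i - y i)^2 * (x j - y j)^2 +
      (if i = j then 8 * a^3 * (x i - y i)^2 else 0) := by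
    intro i j
    split_ifs with hij
    · subst hij; ring
    · ring
  simp only [this, Finset.sum_add_distrib, ← Finset.mul_sum, ← Finset.sum_mul,
    Finset.sum_ite_eq, Finset.mem_univ, if_true, ← hs]
  ring

lemma infLap_radial' {n : ℕ} (y x : EuclideanSpace ℝ (Fin n)) (hxy : x ≠ y) (g g1 : ℝ → ℝ) (g2 : ℝ)
    (hh : ∀ᶠ t in nhds (‖x - y‖), HasDerivAt g (g1 t) t)
    (hh1 : HasDerivAt g1 g2 (‖x - y‖)) :
    infLap (fun z => g (‖z - y‖)) x = g1 ‖x - y‖ ^ 2 * g2 := by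
  have hpos : 0 < ‖x - y‖ := norm_pos_iff.2 (sub_ne_zero.2 hxy)
  have hsq : √(‖x - y‖^2) = ‖x - y‖ := Real.sqrt_sq hpos.le
  have e : (fun z => g (‖z - y‖)) = fun z => (fun t => g (√t)) (‖z - y‖^2) := by
    ext z; simp [Real.sqrt_sq (norm_nonneg _)]
  have hc : Filter.Tendsto (fun t => √t) (nhds (‖x - y‖^2)) (nhds ‖x - y‖) := by
    have := Real.continuous_sqrt.tendsto (‖x - y‖^2)
    rwa [hsq] at this
  have hne : ‖x - y‖^2 ≠ 0 := by positivity
  have d0 := Real.hasDerivAt_sqrt hne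
  have hh1' : HasDerivAt g1 g2 (√(‖x - y‖^2)) := by rwa [hsq]
  have hd := (hh1'.comp _ d0).div (d0.const_mul 2) (by rw [hsq]; positivity)
  rw [e, infLap_radial y x (fun t => g (√t)) (fun t => g1 (√t) / (2 * √t)) _ ?_ hd]
  · simp only [Function.comp, hsq]
    field_simp
    ring
  · filter_upwards [hc.eventually hh, eventually_ne_nhds hne] with t ht ht2
    have := ht.comp t (Real.hasDerivAt_sqrt ht2)
    exact this.congr_deriv (by ring)

lemma upper_barrier {n : ℕ} {Ω : Set (EuclideanSpace ℝ (Fin n))}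
    {f : ℝ → ℝ} {u : EuclideanSpace ℝ (Fin n) → ℝ} (hfmono : MonotoneOn f (Ici 0))
    (huc : ContinuousOn u Ω) (hu0 : ∀ x ∈ Ω, 0 ≤ u x)
    (hsup : IsViscSupersol Ω u (fun _ t => f t))
    {γ α T K A R : ℝ} (hα : α * (3 - γ) = 4) (hα1 : 1 < α) (hA : 0 < A) (hR : 0 < R)
    (hf : ∀ s, 0 < s → s ≤ T → f s ≤ K * s ^ γ) (hAK : K * A ^ γ < A ^ 3 * (α ^ 3 * (α - 1)))
    (hAR : A * R ^ α ≤ T) {y : EuclideanSpace ℝ (Fin n)} (hsub : closedBall y R ⊆ Ω)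
    (hu : A * R ^ α ≤ u y) : ∀ x ∈ ball y R, 0 < u x := by
  have hcont : ContinuousOn (fun x => u x - A * (R - ‖x - y‖) ^ α) (closedBall y R) := by
    refine (huc.mono hsub).sub (Continuous.continuousOn ?_)
    refine continuous_const.mul (Continuous.rpow_const (by fun_prop) ?_)
    intro x; right; linarith
  obtain ⟨x₁, hx₁, hmin⟩ := (isCompact_closedBall y R).exists_isMinOn
    ⟨y, mem_closedBall_self hR.le⟩ hcont
  have key : 0 ≤ u x₁ - A * (R - ‖x₁ - y‖) ^ α := by
    by_contra hneg
    push Not at hneg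
    have hle : ‖x₁ - y‖ ≤ R := by rw [← dist_eq_norm]; exact hx₁
    have hne : x₁ ≠ y := by
      rintro rfl
      simp at hneg
      linarith
    have hux := hu0 x₁ (hsub hx₁)
    have hlt : ‖x₁ - y‖ < R := by
      refine lt_of_le_of_ne hle fun h => ?_
      rw [h, sub_self, Real.zero_rpow (by linarith)] at hneg
      linarith
    have hpos : 0 < ‖x₁ - y‖ := norm_pos_iff.2 (sub_ne_zero.2 hne)
    set q := R - ‖x₁ - y‖ with hq
    have hq0 : 0 < q := by linarith
    set c := u x₁ - A * q ^ α with hc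
    have hd : ∀ t, t < R → ∀ b : ℝ, HasDerivAt (fun t => (R - t) ^ b) (-(b * (R - t) ^ (b-1))) t := by
      intro t ht b
      have := ((hasDerivAt_id t).const_sub R).rpow_const (p := b)
        (Or.inl (by simp only [id]; linarith))
      exact this.congr_deriv (by simp)
    have hinf := infLap_radial' y x₁ hne (fun t => A * (R - t) ^ α + c)
      (fun t => A * (-(α * (R - t) ^ (α-1))))
      (A * (-(α * (-((α - 1) * (R - ‖x₁ - y‖) ^ (α-1-1)))))) (by
        filter_upwards [eventually_lt_nhds hlt] with t ht
        exact ((hd t ht α).const_mul A).add_const c)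
        ((((hd _ hlt (α-1)).const_mul α).neg).const_mul A)
    have hball : ball y R ∈ nhds x₁ := isOpen_ball.mem_nhds (by rw [mem_ball, dist_eq_norm]; exact hlt)
    have hv := hsup.loc (φ := fun z => A * (R - ‖z - y‖) ^ α + c) (hsub hx₁) (by
        have h1 : ContDiffAt ℝ 2 (fun z : EuclideanSpace ℝ (Fin n) => ‖z - y‖) x₁ :=
          (contDiffAt_id.sub contDiffAt_const).norm ℝ (sub_ne_zero.2 hne)
        have h2 : ContDiffAt ℝ 2 (fun z : EuclideanSpace ℝ (Fin n) => (R - ‖z - y‖) ^ α) x₁ :=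
          (contDiffAt_const.sub h1).rpow_const_of_ne hq0.ne'
        exact (contDiffAt_const.mul h2).add contDiffAt_const)
      (by simp only [← hq, hc]; ring) (by
        filter_upwards [hball] with z hz
        have := hmin (ball_subset_closedBall hz)
        simp only [mem_ofPred_eq] at this
        simp only [← hq] at this ⊢
        linarith)
    rw [hinf] at hv
    simp only [← hq] at hv
    have hp : (q ^ (α-1))^2 * q ^ (α-1-1) = (q ^ α) ^ γ := by
      rw [← Real.rpow_natCast, ← Real.rpow_mul hq0.le, ← Real.rpow_add hq0, ← Real.rpow_mul hq0.le]
      congr 1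
      push_cast
      linarith
    have hφ0 : 0 < A * q ^ α := by positivity
    have h3 : f (u x₁) ≤ K * (A * q ^ α) ^ γ := by
      refine (hfmono hux hφ0.le (by linarith)).trans (hf _ hφ0 (le_trans ?_ hAR))
      gcongr
      linarith
    rw [Real.mul_rpow hA.le (by positivity)] at h3
    have h4 : (A * -(α * q ^ (α - 1))) ^ 2 * (A * -(α * -((α - 1) * q ^ (α - 1 - 1)))) =
        A^3 * (α^3 * (α - 1)) * (q ^ α) ^ γ := by
      rw [← hp]; ring
    rw [h4] at hv
    have h5 : 0 < (q ^ α) ^ γ := by positivity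
    have := mul_lt_mul_of_pos_right hAK h5
    linarith
  intro x hx
  have h1 := hmin (ball_subset_closedBall hx)
  simp only [mem_ofPred_eq] at h1
  have : 0 < R - ‖x - y‖ := by rw [← dist_eq_norm]; linarith [mem_ball.1 hx]
  have : 0 < A * (R - ‖x - y‖) ^ α := by positivity
  linarith

lemma lower_barrier {n : ℕ} {Ω : Set (EuclideanSpace ℝ (Fin n))}
    {f : ℝ → ℝ} {u : EuclideanSpace ℝ (Fin n) → ℝ}
    (huc : ContinuousOn u Ω)
    (hsubs : IsViscSubsol Ω u (fun _ t => f t))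
    {γ α T k a r : ℝ} (hγ0 : 0 ≤ γ) (hα : α * (3 - γ) = 4) (hα1 : 1 < α) (ha : 0 < a) (hr : 0 < r)
    (hk : 0 < k)
    (hT : ∀ x ∈ Ω, u x ≤ T)
    (hf : ∀ s, 0 < s → s ≤ T → k * s ^ γ ≤ f s) (hak : a ^ 3 * α ^ 4 < k * a ^ γ)
    {y : EuclideanSpace ℝ (Fin n)} (hsub : closedBall y r ⊆ Ω)
    (hu : 0 < u y) : ∃ z ∈ closedBall y r, a * r ^ α ≤ u z := by
  by_contra! hcon
  obtain ⟨e, he, hey⟩ : ∃ e > 0, a * e ^ (α/2) < u y := by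
    refine ⟨(u y / (2 * a)) ^ (2/α), by positivity, ?_⟩
    rw [← Real.rpow_mul (by positivity)]
    have : 2 / α * (α / 2) = 1 := by field_simp
    rw [this, Real.rpow_one]
    have : a * (u y / (2*a)) = u y / 2 := by field_simp
    linarith
  have hP : ∀ x : EuclideanSpace ℝ (Fin n), 0 < ‖x - y‖^2 + e := fun x => by positivity
  have hsm : ContDiff ℝ 2 (fun x : EuclideanSpace ℝ (Fin n) => a * (‖x - y‖^2 + e) ^ (α/2)) := by
    refine contDiff_const.mul (ContDiff.rpow_const_of_ne ?_ fun x => (hP x).ne')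
    exact ((contDiff_id.sub contDiff_const).norm_sq ℝ).add contDiff_const
  have hcont : ContinuousOn (fun x => u x - a * (‖x - y‖^2 + e) ^ (α/2)) (closedBall y r) :=
    (huc.mono hsub).sub hsm.continuous.continuousOn
  obtain ⟨x₁, hx₁, hmax⟩ := (isCompact_closedBall y r).exists_isMaxOn
    ⟨y, mem_closedBall_self hr.le⟩ hcont
  have h0 := hmax (mem_closedBall_self hr.le)
  simp only [mem_ofPred_eq, sub_self, norm_zero] at h0
  norm_num at h0
  have hle : ‖x₁ - y‖ ≤ r := by rw [← dist_eq_norm]; exact hx₁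
  have hlt : ‖x₁ - y‖ < r := by
    refine lt_of_le_of_ne hle fun h => ?_
    have h1 := hcon x₁ hx₁
    have h2 : r ^ α ≤ (‖x₁ - y‖^2 + e) ^ (α/2) := by
      have : r ^ α = (r^2) ^ (α/2) := by
        rw [← Real.rpow_natCast, ← Real.rpow_mul hr.le]; congr 1; push_cast; ring
      rw [this, h]
      gcongr
      linarith
    have := mul_le_mul_of_nonneg_left h2 ha.le
    linarith
  have hball : ball y r ∈ nhds x₁ := isOpen_ball.mem_nhds (by rw [mem_ball, dist_eq_norm]; exact hlt)
  set c := u x₁ - a * (‖x₁ - y‖^2 + e) ^ (α/2) with hc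
  have hd : ∀ t, 0 < t + e → ∀ b : ℝ, HasDerivAt (fun t => (t + e) ^ b) (b * (t + e) ^ (b-1)) t := by
    intro t ht b
    have := ((hasDerivAt_id t).add_const e).rpow_const (p := b) (Or.inl (by simpa using ht.ne'))
    exact this.congr_deriv (by simp)
  have hv := hsubs (fun x => a * (‖x - y‖^2 + e) ^ (α/2) + c) (hsm.add contDiff_const) x₁ (hsub hx₁)
    (by simp only [hc]; ring) (by
      filter_upwards [hball] with z hz
      have := hmax (ball_subset_closedBall hz)
      simp only [mem_ofPred_eq] at this
      linarith)
  have hinf := infLap_radial y x₁ (fun t => a * (t + e) ^ (α/2) + c)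
    (fun t => a * (α/2 * (t + e) ^ (α/2-1))) (a * (α/2 * ((α/2-1) * (‖x₁ - y‖^2 + e) ^ (α/2-1-1)))) (by
      have : ∀ᶠ t in nhds (‖x₁ - y‖^2), -e < t := eventually_gt_nhds (by linarith [hP x₁])
      filter_upwards [this] with t ht
      exact ((hd t (by linarith) _).const_mul a).add_const c)
    (((hd _ (hP x₁) _).const_mul _).const_mul a)
  simp only [hinf] at hv
  have hcu : a * (‖x₁ - y‖^2 + e) ^ (α/2) + c = u x₁ := by simp only [hc]; ring
  rw [hcu] at hv
  have hPp := hP x₁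
  have hρ0 : 0 ≤ ‖x₁ - y‖^2 := by positivity
  set ρ := ‖x₁ - y‖^2
  obtain ⟨P, hPd⟩ : ∃ P, P = ρ + e := ⟨_, rfl⟩
  rw [← hPd] at hv hcu hPp
  have hw1 : P ^ (α/2-1) = P ^ (α/2-1-1) * P := by
    rw [Real.rpow_sub_one hPp.ne' (α/2-1)]; field_simp
  have hw2 : (P ^ (α/2-1-1))^3 * P^4 = (P ^ (α/2)) ^ γ := by
    rw [← Real.rpow_natCast _ 3, ← Real.rpow_natCast P 4, ← Real.rpow_mul hPp.le,
      ← Real.rpow_add hPp, ← Real.rpow_mul hPp.le]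
    congr 1
    push_cast
    linarith
  rw [hw1] at hv
  have hw0 : 0 < P ^ (α/2-1-1) := by positivity
  set w := P ^ (α/2-1-1)
  have hQ : ρ * (P + ρ * (α - 2)) ≤ α * P^2 := by
    have h1 : ρ ≤ P := by linarith
    have h2 : ρ * P ≤ P^2 := by nlinarith
    have h3 : ρ^2 ≤ P^2 := by gcongr
    nlinarith
  have hup : 8 * ρ * (a * (α / 2 * (w * P))) ^ 2 * (a * (α / 2 * (w * P)) +
      2 * ρ * (a * (α / 2 * ((α / 2 - 1) * w)))) ≤ a^3 * α^4 * (P ^ (α/2)) ^ γ := by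
    rw [← hw2]
    have : a^3 * α^3 * w^3 * P^2 * (ρ * (P + ρ * (α - 2))) ≤ a^3 * α^3 * w^3 * P^2 * (α * P^2) := by
      gcongr
    calc _ = a^3 * α^3 * w^3 * P^2 * (ρ * (P + ρ * (α - 2))) := by ring
      _ ≤ _ := this
      _ = _ := by ring
  have hψ : 0 < a * P ^ (α/2) := by positivity
  have hc0 : 0 < c := by linarith
  have hf1 := hf (u x₁) (by linarith) (hT _ (hsub hx₁))
  have hf2 : k * (a * P ^ (α/2)) ^ γ ≤ k * (u x₁) ^ γ := by
    gcongr
    linarith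
  rw [Real.mul_rpow ha.le (by positivity)] at hf2
  have h5 : 0 < (P ^ (α/2)) ^ γ := by positivity
  have := mul_lt_mul_of_pos_right hak h5
  linarith

lemma f_bounds {f : ℝ → ℝ} {M N γ T : ℝ} (hM : 0 < M) (hN : 0 < N) (hγ0 : 0 ≤ γ) (hT : 0 < T)
    (hfmono : MonotoneOn f (Ici 0)) (hf12 : Cond12 f M γ) (hf51 : Cond51 f N γ) :
    (∀ s, 0 < s → s ≤ T → f s ≤ 0) ∨
    ∃ K > 0, ∃ k > 0, ∀ s, 0 < s → s ≤ T → k * s ^ γ ≤ f s ∧ f s ≤ K * s ^ γ := by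
  obtain ⟨d1, hd1, h1⟩ := hf12 T hT
  obtain ⟨d2, hd2, h2⟩ := hf51 T hT
  by_cases hfT : f T ≤ 0
  · left
    intro s hs hsT
    exact (hfmono hs.le hT.le hsT).trans hfT
  · right
    push Not at hfT
    obtain ⟨d, hd, hdd1, hdd2, hdd3⟩ : ∃ d > 0, d ≤ d1 ∧ d ≤ d2 ∧ d ≤ 1 :=
      ⟨min (min d1 d2) 1, by positivity, (min_le_left _ _).trans (min_le_left _ _),
        (min_le_left _ _).trans (min_le_right _ _), min_le_right _ _⟩
    refine ⟨(M + (d ^ γ)⁻¹) * f T / T ^ γ, by positivity, N * d ^ γ * f T / T ^ γ, by positivity, ?_⟩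
    intro s hs hsT
    have hTγ : 0 < T ^ γ := by positivity
    obtain ⟨t, ht⟩ : ∃ t, t = s / T := ⟨_, rfl⟩
    have ht0 : 0 < t := by rw [ht]; positivity
    have ht1 : t ≤ 1 := by rw [ht]; exact (div_le_one hT).2 hsT
    have hst : s = t * T := by rw [ht]; field_simp
    have hsp : s ^ γ = t ^ γ * T ^ γ := by rw [hst, Real.mul_rpow ht0.le hT.le]
    have e1 : N * d ^ γ * f T / T ^ γ * s ^ γ = N * d ^ γ * t ^ γ * f T := by
      rw [hsp]; field_simp
    have e2 : (M + (d ^ γ)⁻¹) * f T / T ^ γ * s ^ γ = M * t ^ γ * f T + (d ^ γ)⁻¹ * t ^ γ * f T := by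
      rw [hsp]; field_simp
    rw [e1, e2]
    have hdg1 : d ^ γ ≤ 1 := Real.rpow_le_one hd.le hdd3 hγ0
    have htg1 : t ^ γ ≤ 1 := Real.rpow_le_one ht0.le ht1 hγ0
    have hdg : 0 < d ^ γ := by positivity
    have htg : 0 < t ^ γ := by positivity
    by_cases htd : t ≤ d
    · have a1 := (h1 T hT le_rfl t ht0 (htd.trans hdd1)).2
      have a2 := (h2 T hT le_rfl t ht0 (htd.trans hdd2)).1
      rw [← hst] at a1 a2
      constructor
      · refine le_trans ?_ a2
        have : N * d ^ γ * t ^ γ * f T ≤ N * 1 * t ^ γ * f T := by gcongr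
        linarith
      · have : 0 < (d ^ γ)⁻¹ * t ^ γ * f T := by positivity
        linarith
    · push Not at htd
      have a2 := (h2 T hT le_rfl d hd hdd2).1
      constructor
      · have : f (d * T) ≤ f s := hfmono (by simp; positivity) hs.le (by rw [hst]; gcongr)
        refine le_trans ?_ (a2.trans this)
        have : N * d ^ γ * t ^ γ * f T ≤ N * d ^ γ * 1 * f T := by gcongr
        linarith
      · have b1 : f s ≤ f T := hfmono hs.le hT.le hsT
        have b2 : 1 ≤ (d ^ γ)⁻¹ * t ^ γ := by
          rw [inv_mul_eq_div, one_le_div hdg]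
          gcongr
        have b3 : 0 < M * t ^ γ * f T := by positivity
        nlinarith

lemma exists_amp {γ L : ℝ} (hγ3 : γ < 3) (hL : 0 < L) : ∃ A > 0, A ^ 3 = L * A ^ γ := by
  refine ⟨L ^ (1 / (3 - γ)), by positivity, ?_⟩
  have h3 : 3 - γ ≠ 0 := by linarith
  rw [← Real.rpow_natCast _ 3, ← Real.rpow_mul hL.le, ← Real.rpow_mul hL.le]
  nth_rewrite 2 [← Real.rpow_one L]
  rw [← Real.rpow_add hL]
  congr 1
  push_cast
  field_simp
  ring

/-- Porosity of the free boundary (Corollary 4.1). -/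
theorem free_boundary_porous {n : ℕ} (Ω : Set (EuclideanSpace ℝ (Fin n))) (hΩo : IsOpen Ω)
    (f : ℝ → ℝ) (M N γ : ℝ) (hM : 0 < M) (hN : 0 < N) (hγ0 : 0 ≤ γ) (hγ3 : γ < 3)
    (hfc : ContinuousOn f (Ici 0)) (hfmono : MonotoneOn f (Ici 0))
    (hf12 : Cond12 f M γ) (hf51 : Cond51 f N γ)
    (u : EuclideanSpace ℝ (Fin n) → ℝ)
    (huc : ContinuousOn u Ω) (hu0 : ∀ x ∈ Ω, 0 ≤ u x)
    (hub : ∃ B, ∀ x ∈ Ω, u x ≤ B)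
    (hsol : IsViscSol Ω u (fun _ t => f t))
    (Ω' : Set (EuclideanSpace ℝ (Fin n))) (hΩ'o : IsOpen Ω')
    (hΩ'cpt : IsCompact (closure Ω')) (hΩ'sub : closure Ω' ⊆ Ω) :
    ∃ σ : ℝ, 0 < σ ∧ σ < 1 ∧
      IsPorousWith (frontier {x | x ∈ Ω ∧ 0 < u x} ∩ Ω') σ := by
  obtain ⟨B, hB⟩ := hub
  obtain ⟨T, hT0, hT⟩ : ∃ T > 0, ∀ x ∈ Ω, u x ≤ T :=
    ⟨max B 1, by positivity, fun x hx => (hB x hx).trans (le_max_left _ _)⟩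
  obtain ⟨hsup, hsubs⟩ := hsol
  obtain ⟨α, hαd⟩ : ∃ α, α = 4 / (3 - γ) := ⟨_, rfl⟩
  have hγ : 0 < 3 - γ := by linarith
  have hα : α * (3 - γ) = 4 := by rw [hαd]; field_simp
  have hα1 : 1 < α := by rw [hαd, one_lt_div hγ]; linarith
  have hα0 : 0 < α := by linarith
  obtain ⟨δ, hδ, hδΩ⟩ := hΩ'cpt.exists_cthickening_subset_open hΩo hΩ'sub
  have hcb : ∀ x ∈ Ω', closedBall x δ ⊆ Ω := fun x hx =>
    (closedBall_subset_cthickening (subset_closure hx) δ).trans hδΩ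
  have hE0 : ∀ x ∈ frontier {x | x ∈ Ω ∧ 0 < u x} ∩ Ω', u x = 0 := by
    rintro x ⟨hx, hx'⟩
    have hxΩ : x ∈ Ω := hΩ'sub (subset_closure hx')
    by_contra hne
    have hpos : 0 < u x := lt_of_le_of_ne (hu0 x hxΩ) (Ne.symm hne)
    apply hx.2
    rw [mem_interior_iff_mem_nhds]
    have := (huc.continuousAt (hΩo.mem_nhds hxΩ)).eventually (eventually_gt_nhds hpos)
    filter_upwards [this, hΩo.mem_nhds hxΩ] with z h1 h2 using ⟨h2, h1⟩
  have hEa : ∀ x ∈ frontier {x | x ∈ Ω ∧ 0 < u x} ∩ Ω', ∀ ε > 0, ∃ y, dist x y < ε ∧ 0 < u y := by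
    rintro x ⟨hx, hx'⟩ ε hε
    obtain ⟨y, hy, hd⟩ := Metric.mem_closure_iff.1 hx.1 ε hε
    exact ⟨y, hd, hy.2⟩
  rcases f_bounds hM hN hγ0 hT0 hfmono hf12 hf51 with hf | ⟨K, hK, k, hk, hf⟩
  · refine ⟨1/2, by norm_num, by norm_num, 1, one_pos, fun x hx => ?_⟩
    exfalso
    obtain ⟨y, hxy, huy⟩ := hEa x hx (δ/4) (by positivity)
    have hsub : closedBall y (δ/2) ⊆ Ω := by
      refine subset_trans (closedBall_subset_closedBall' ?_) (hcb x hx.2)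
      rw [dist_comm]; linarith
    have hyΩ : y ∈ Ω := hsub (mem_closedBall_self (by positivity))
    have hRp : 0 < (δ/2) ^ α := by positivity
    have hAe : u y / (δ/2) ^ α * (δ/2) ^ α = u y := by field_simp
    have hA0 : 0 < u y / (δ/2) ^ α := by positivity
    have hα2 : 0 < α - 1 := by linarith
    have := upper_barrier (K := 0) (A := u y / (δ/2) ^ α) (R := δ/2) (T := T) (y := y)
      hfmono huc hu0 hsup hα hα1 hA0 (by positivity)
      (fun s hs hsT => by simpa using hf s hs hsT) (by rw [zero_mul]; positivity)
      (by rw [hAe]; exact hT y hyΩ) hsub hAe.le x (by rw [mem_ball]; linarith)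
    rw [hE0 x hx] at this
    exact lt_irrefl _ this
  · have hα2 : 0 < α - 1 := by linarith
    have hc0 : 0 < α^3 * (α - 1) := by positivity
    obtain ⟨A, hA, hAe⟩ := exists_amp (γ := γ) (L := 2 * K / (α^3 * (α - 1))) hγ3 (by positivity)
    obtain ⟨a, ha, hae⟩ := exists_amp (γ := γ) (L := k / (2 * α^4)) hγ3 (by positivity)
    have hAK : K * A ^ γ < A ^ 3 * (α ^ 3 * (α - 1)) := by
      have h1 : A ^ 3 * (α ^ 3 * (α - 1)) = 2 * (K * A ^ γ) := by rw [hAe]; field_simp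
      have h2 : 0 < K * A ^ γ := by positivity
      linarith
    have hak : a ^ 3 * α ^ 4 < k * a ^ γ := by
      have h1 : a ^ 3 * α ^ 4 = (k * a ^ γ) / 2 := by rw [hae]; field_simp
      have h2 : 0 < k * a ^ γ := by positivity
      linarith
    have hpw : ∀ b : ℝ, 0 < b → (b ^ (1/α)) ^ α = b := by
      intro b hb
      rw [← Real.rpow_mul hb.le, one_div_mul_cancel hα0.ne', Real.rpow_one]
    obtain ⟨σ, hσ0, hσ1, hσ2⟩ : ∃ σ > 0, σ ≤ 1/2 ∧ σ ≤ (a/A) ^ (1/α) / 4 :=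
      ⟨min (1/2) ((a/A) ^ (1/α) / 4), by positivity, min_le_left _ _, min_le_right _ _⟩
    refine ⟨σ, hσ0, by linarith, min δ ((T/A) ^ (1/α)), by positivity, fun x hx r hr hrR => ?_⟩
    have hrδ : r < δ := hrR.trans_le (min_le_left _ _)
    have hrT : r < (T/A) ^ (1/α) := hrR.trans_le (min_le_right _ _)
    obtain ⟨y, hxy, huy⟩ := hEa x hx (r/4) (by positivity)
    have hsub : closedBall y (r/4) ⊆ Ω := by
      refine subset_trans (closedBall_subset_closedBall' ?_) (hcb x hx.2)
      rw [dist_comm]; linarith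
    obtain ⟨z, hz, huz⟩ := lower_barrier (r := r/4) huc hsubs hγ0 hα hα1 ha (by positivity) hk hT
      (fun s hs hsT => (hf s hs hsT).1) hak hsub huy
    have hzx : dist z x ≤ r/2 := by
      have := dist_triangle z y x
      rw [dist_comm y x] at this
      linarith [mem_closedBall.1 hz]
    have hσr : σ * r ≤ r / 2 := by nlinarith
    have hub2 : A * (σ * r) ^ α ≤ u z := by
      refine le_trans ?_ huz
      have h1 : (σ * r) ^ α ≤ ((a/A) ^ (1/α) * (r/4)) ^ α := by
        refine Real.rpow_le_rpow (by positivity) ?_ hα0.le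
        nlinarith
      rw [Real.mul_rpow (x := (a/A) ^ (1/α)) (by positivity) (by positivity), hpw _ (by positivity)] at h1
      calc A * (σ * r) ^ α ≤ A * (a / A * (r/4) ^ α) := by gcongr
        _ = _ := by field_simp
    have hAT : A * (σ * r) ^ α ≤ T := by
      have h1 : (σ * r) ^ α ≤ ((T/A) ^ (1/α)) ^ α := by
        gcongr
        linarith
      rw [hpw _ (by positivity)] at h1
      calc A * (σ * r) ^ α ≤ A * (T / A) := by gcongr
        _ = _ := by field_simp
    have hsub2 : closedBall z (σ * r) ⊆ Ω :=
      subset_trans (closedBall_subset_closedBall' (by linarith)) (hcb x hx.2)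
    have hpos := upper_barrier hfmono huc hu0 hsup hα hα1 hA (mul_pos hσ0 hr)
      (fun s hs hsT => (hf s hs hsT).2) hAK hAT hsub2 hub2
    refine ⟨z, fun w hw => ⟨?_, fun hwE => ?_⟩⟩
    · have := dist_triangle w z x
      rw [mem_ball] at hw ⊢
      linarith
    · have := hpos w hw
      rw [hE0 w hwE] at this
      exact lt_irrefl _ this
end

section
/- Infinite-order vanishing in the borderline case: Let Ω ⊂ ℝⁿ be open and let f : [0,∞) → ℝ be continuous and satisfy condition (6.1) with constant M > 0 (the case γ = 3). If u ∈ C(Ω) is a bounded non-negative viscosity solution of Δ∞u = f(u) in Ω and u(z) = 0 for some z ∈ Ω, then z is a zero of infinite order: for every m > 0 there exist constants C > 0 and ρ > 0 such that u(x) ≤ C|x − z|^m for all x with |x − z| < ρ. -/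
open Set Metric Filter MeasureTheory

/-- Condition (6.1): for every `T > 0` there is `δ₀ > 0` such that
`0 ≤ f(δt) ≤ M δ³ f(t)` for all `0 < t ≤ T` and `0 < δ ≤ δ₀`. -/
def Cond61 (f : ℝ → ℝ) (M : ℝ) : Prop :=
  ∀ T > 0, ∃ δ₀ > 0, ∀ t : ℝ, 0 < t → t ≤ T → ∀ δ : ℝ, 0 < δ → δ ≤ δ₀ →
    0 ≤ f (δ * t) ∧ f (δ * t) ≤ M * δ ^ 3 * f t

lemma aux_P (α K q : ℝ) (hα1 : 1 ≤ α) (hαK : K ≤ α) (hq : 1 ≤ α * q) :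
    K < 4 * α ^ 2 * q * (4 * α ^ 2 * q - 2 * α) := by
  have h1 : 4 * α ≤ 4 * α ^ 2 * q := by nlinarith
  have h2 : 4 * α * (2 * α) ≤ 4 * α ^ 2 * q * (4 * α ^ 2 * q - 2 * α) :=
    mul_le_mul h1 (by linarith) (by linarith) (by linarith)
  nlinarith

lemma aux_fderiv {n : ℕ} (ε α c : ℝ) (y x v : EuclideanSpace ℝ (Fin n)) :
    HasFDerivAt (fun x => ε * Real.exp (-α * ‖x - y‖ ^ 2) - c)
      ((ε * Real.exp (-α * ‖x - y‖ ^ 2) * (-α * 2)) • (innerSL ℝ (x - y))) x := by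
  have h1 : HasFDerivAt (fun x : EuclideanSpace ℝ (Fin n) => x - y)
    (ContinuousLinearMap.id ℝ _) x := (hasFDerivAt_id x).sub_const y
  have h2 := h1.norm_sq
  have h3 := (((h2.const_mul (-α)).exp).const_mul ε).sub_const c
  refine h3.congr_fderiv ?_
  ext w
  simp
  ring

lemma aux_infLap {n : ℕ} (ε α c : ℝ) (y x : EuclideanSpace ℝ (Fin n)) :
    infLap (fun x => ε * Real.exp (-α * ‖x - y‖ ^ 2) - c) x =
      (4 * α ^ 2 * ‖x - y‖ ^ 2 * (4 * α ^ 2 * ‖x - y‖ ^ 2 - 2 * α)) *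
        (ε * Real.exp (-α * ‖x - y‖ ^ 2)) ^ 3 := by
  have e1 : ∀ (x : EuclideanSpace ℝ (Fin n)) (i : Fin n),
      fderiv ℝ (fun x => ε * Real.exp (-α * ‖x - y‖ ^ 2) - c) x (EuclideanSpace.single i 1) =
      (ε * Real.exp (-α * ‖x - y‖ ^ 2) * (-α * 2)) * (x i - y i) := by
    intro x i
    rw [(aux_fderiv ε α c y x 0).fderiv]
    simp [EuclideanSpace.inner_single_right]
  have e2 : ∀ i j : Fin n,
      fderiv ℝ (fun x : EuclideanSpace ℝ (Fin n) =>
        (ε * Real.exp (-α * ‖x - y‖ ^ 2) * (-α * 2)) * (x i - y i)) x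
        (EuclideanSpace.single j 1) =
      (ε * Real.exp (-α * ‖x - y‖ ^ 2) * (-α * 2)) * (if i = j then 1 else 0) +
      (ε * Real.exp (-α * ‖x - y‖ ^ 2) * (-α * 2)) * (-α * 2) * (x i - y i) * (x j - y j) := by
    intro i j
    have h1 := (aux_fderiv ε α 0 y x 0).mul_const (-α * 2)
    have h2 : HasFDerivAt (fun x : EuclideanSpace ℝ (Fin n) => x i - y i)
      (EuclideanSpace.proj i : EuclideanSpace ℝ (Fin n) →L[ℝ] ℝ) x :=
      ((EuclideanSpace.proj i : EuclideanSpace ℝ (Fin n) →L[ℝ] ℝ).hasFDerivAt).sub_const _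
    have h3 := h1.mul h2
    simp only [sub_zero] at h3
    have h4 := h3.fderiv
    have h5 : fderiv ℝ (fun x : EuclideanSpace ℝ (Fin n) =>
        (ε * Real.exp (-α * ‖x - y‖ ^ 2) * (-α * 2)) * (x i - y i)) x = _ := h4
    rw [h5]
    simp [EuclideanSpace.inner_single_right]
    split_ifs <;> ring
  have e3 : ‖x - y‖ ^ 2 = ∑ i, (x i - y i) ^ 2 := by
    rw [EuclideanSpace.norm_sq_eq]; simp
  unfold infLap
  simp only [e1, e2]
  generalize ε * Real.exp (-α * ‖x - y‖ ^ 2) = E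
  have e4 : ∀ i : Fin n, ∑ j : Fin n, E * (-α * 2) * (x i - y i) * (E * (-α * 2) * (x j - y j)) *
      (E * (-α * 2) * (if i = j then 1 else 0) + E * (-α * 2) * (-α * 2) * (x i - y i) * (x j - y j))
      = (E * (-α * 2)) ^ 3 * (x i - y i) ^ 2
        + (E * (-α * 2)) ^ 3 * (-α * 2) * (x i - y i) ^ 2 * ‖x - y‖ ^ 2 := by
    intro i
    rw [e3, Finset.mul_sum]
    simp only [mul_add, Finset.sum_add_distrib]
    congr 1
    · simp; ring
    · exact Finset.sum_congr rfl fun j _ => by ring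
  simp only [e4]
  rw [Finset.sum_add_distrib, ← Finset.mul_sum, ← Finset.sum_mul, ← Finset.mul_sum, ← e3]
  ring

set_option maxHeartbeats 1000000

/-- Infinite-order vanishing in the borderline case (Lemma 5.1). -/
theorem infinite_order_zero {n : ℕ} (Ω : Set (EuclideanSpace ℝ (Fin n))) (hΩo : IsOpen Ω)
    (f : ℝ → ℝ) (M : ℝ) (hM : 0 < M)
    (hfc : ContinuousOn f (Ici 0)) (hf : Cond61 f M)
    (u : EuclideanSpace ℝ (Fin n) → ℝ)
    (huc : ContinuousOn u Ω) (hu0 : ∀ x ∈ Ω, 0 ≤ u x)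
    (hub : ∃ B, ∀ x ∈ Ω, u x ≤ B)
    (hsol : IsViscSol Ω u (fun _ t => f t))
    (z : EuclideanSpace ℝ (Fin n)) (hz : z ∈ Ω) (huz : u z = 0) :
    ∀ m : ℝ, 0 < m → ∃ C > (0 : ℝ), ∃ ρ > (0 : ℝ), ball z ρ ⊆ Ω ∧
      ∀ x ∈ ball z ρ, u x ≤ C * dist x z ^ m := by
  intro m hm
  obtain ⟨δ₀, hδ₀, H⟩ := hf 1 one_pos
  set K : ℝ := M * f 1 with hK
  have hf1 : ∀ s, 0 < s → s ≤ δ₀ → 0 ≤ f s ∧ f s ≤ K * s ^ 3 := by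
    intro s hs hs'
    have := H 1 one_pos le_rfl s hs hs'
    rw [mul_one] at this
    exact ⟨this.1, this.2.trans (le_of_eq (by rw [hK]; ring))⟩
  have hK0 : 0 ≤ K := by
    have := hf1 δ₀ hδ₀ le_rfl
    have h3 : 0 < δ₀ ^ 3 := by positivity
    by_contra hneg
    push Not at hneg
    nlinarith
  have hf00 : f 0 ≤ 0 := by
    have h1 : Tendsto f (nhdsWithin 0 (Ioi 0)) (nhds (f 0)) :=
      (hfc 0 (by simp)).mono_left (nhdsWithin_mono _ Ioi_subset_Ici_self)
    have h2 : Tendsto (fun s : ℝ => K * s ^ 3) (nhdsWithin 0 (Ioi 0)) (nhds (K * 0 ^ 3)) :=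
      ((by fun_prop : Continuous fun s : ℝ => K * s ^ 3).tendsto 0).mono_left nhdsWithin_le_nhds
    have h3 : ∀ᶠ s in nhdsWithin (0:ℝ) (Ioi 0), f s ≤ K * s ^ 3 := by
      filter_upwards [Ioc_mem_nhdsGT hδ₀] with s hs
      exact (hf1 s hs.1 hs.2).2
    simpa using le_of_tendsto_of_tendsto h1 h2 h3
  have hf2 : ∀ s, 0 ≤ s → s ≤ δ₀ → f s ≤ K * s ^ 3 := by
    intro s hs hs'
    rcases hs.eq_or_lt with h | h
    · subst h; simpa using hf00
    · exact (hf1 s h hs').2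
  obtain ⟨r, hr, hrΩ⟩ : ∃ r > 0, ∀ x ∈ ball z r, x ∈ Ω ∧ u x < δ₀ := by
    have hc : ContinuousAt u z := huc.continuousAt (hΩo.mem_nhds hz)
    have h1 : ∀ᶠ x in nhds z, u x < δ₀ := hc.eventually_lt_const (by rw [huz]; exact hδ₀)
    have h0 : ∀ᶠ x in nhds z, x ∈ Ω := hΩo.mem_nhds hz
    have h2 := h0.and h1
    obtain ⟨r, hr, h⟩ := Metric.eventually_nhds_iff_ball.1 h2
    exact ⟨r, hr, h⟩
  have key : ∀ y ∈ ball z (r / 4), u y ≤ 0 := by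
    intro y hy
    by_contra hneg
    push Not at hneg
    have hsub : closedBall y (r / 2) ⊆ ball z r := by
      intro x hx
      rw [mem_closedBall] at hx
      rw [mem_ball] at hy ⊢
      linarith [dist_triangle x y z]
    have hyΩ : y ∈ Ω := (hrΩ y (hsub (mem_closedBall_self (by positivity)))).1
    obtain ⟨s, hs, hsu⟩ : ∃ s > 0, ∀ x ∈ ball y s, u y / 2 < u x := by
      have hc : ContinuousAt u y := huc.continuousAt (hΩo.mem_nhds hyΩ)
      exact Metric.eventually_nhds_iff_ball.1 (hc.eventually_const_lt (by linarith))
    set ε := u y / 2 with hε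
    have hε0 : 0 < ε := by positivity
    set α : ℝ := 1 / s ^ 2 + 1 + K with hα
    have hα0 : 0 < α := by positivity
    have hαs : 1 ≤ α * s ^ 2 := by
      have : 1 / s ^ 2 * s ^ 2 = 1 := by field_simp
      rw [hα]; nlinarith [sq_nonneg s]
    have hα1 : 1 ≤ α := by
      have : 0 < 1 / s ^ 2 := by positivity
      linarith
    have hαK : K ≤ α := by
      have : 0 < 1 / s ^ 2 := by positivity
      linarith
    set c := ε * Real.exp (-α * (r / 2) ^ 2) with hc
    have hc0 : 0 < c := by positivity
    have hcont : ContinuousOn (fun x => u x - (ε * Real.exp (-α * ‖x - y‖ ^ 2) - c))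
        (closedBall y (r / 2)) := by
      refine (huc.mono fun x hx => (hrΩ x (hsub hx)).1).sub ?_
      fun_prop
    obtain ⟨x₀, hx₀, hmin⟩ := (isCompact_closedBall y (r / 2)).exists_isMinOn
      ⟨y, mem_closedBall_self (by positivity)⟩ hcont
    have hzb : ‖z - y‖ < r / 4 := by
      rw [← dist_eq_norm, dist_comm]; exact hy
    have hz1 : c < ε * Real.exp (-α * ‖z - y‖ ^ 2) := by
      rw [hc]
      refine mul_lt_mul_of_pos_left (Real.exp_lt_exp.2 ?_) hε0
      nlinarith [norm_nonneg (z - y), pow_lt_pow_left₀ (show ‖z - y‖ < r / 2 by linarith)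
        (norm_nonneg _) two_ne_zero]
    have hzc : z ∈ closedBall y (r / 2) := by
      rw [mem_closedBall, dist_eq_norm]; linarith
    have hm0 := isMinOn_iff.1 hmin z hzc
    have hneg0 : u x₀ < ε * Real.exp (-α * ‖x₀ - y‖ ^ 2) - c := by
      simp only [huz] at hm0
      linarith
    have hx₀Ω := hrΩ x₀ (hsub hx₀)
    have hux₀ := hu0 x₀ hx₀Ω.1
    have hlt : ‖x₀ - y‖ < r / 2 := by
      rw [mem_closedBall, dist_eq_norm] at hx₀
      refine lt_of_le_of_ne hx₀ fun h => ?_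
      rw [h] at hneg0
      linarith
    have hge : s ≤ ‖x₀ - y‖ := by
      by_contra h
      push Not at h
      have h1 := hsu x₀ (by rw [mem_ball, dist_eq_norm]; exact h)
      have h2 : Real.exp (-α * ‖x₀ - y‖ ^ 2) ≤ 1 := by
        rw [Real.exp_le_one_iff]
        nlinarith [sq_nonneg ‖x₀ - y‖]
      nlinarith
    set d := ε * Real.exp (-α * ‖x₀ - y‖ ^ 2) - u x₀ with hd
    have hloc : IsLocalMin (fun x => u x - (ε * Real.exp (-α * ‖x - y‖ ^ 2) - d)) x₀ := by
      have hnb : closedBall y (r / 2) ∈ nhds x₀ := by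
        refine mem_of_superset (isOpen_ball.mem_nhds ?_) ball_subset_closedBall
        rw [mem_ball, dist_eq_norm]; exact hlt
      filter_upwards [hnb] with x hx
      have := isMinOn_iff.1 hmin x hx
      linarith
    have hsm : ContDiff ℝ 2 (fun x : EuclideanSpace ℝ (Fin n) =>
        ε * Real.exp (-α * ‖x - y‖ ^ 2) - d) := by
      have : ContDiff ℝ 2 (fun x : EuclideanSpace ℝ (Fin n) => ‖x - y‖ ^ 2) :=
        (contDiff_id.sub contDiff_const).norm_sq ℝ
      exact (contDiff_const.mul (contDiff_const.mul this).exp).sub contDiff_const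
    have hfin := hsol.1 _ hsm x₀ hx₀Ω.1 (by rw [hd]; ring) hloc
    rw [aux_infLap] at hfin
    have hval : ε * Real.exp (-α * ‖x₀ - y‖ ^ 2) - d = u x₀ := by rw [hd]; ring
    simp only [hval] at hfin
    have hfu := hf2 (u x₀) hux₀ hx₀Ω.2.le
    set E := ε * Real.exp (-α * ‖x₀ - y‖ ^ 2) with hE
    have hE0 : 0 < E := by positivity
    have huE : u x₀ ^ 3 ≤ E ^ 3 := pow_le_pow_left₀ hux₀ (by linarith) 3
    have hE3 : 0 < E ^ 3 := by positivity
    have hq : 1 ≤ α * ‖x₀ - y‖ ^ 2 := by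
      exact hαs.trans (mul_le_mul_of_nonneg_left (pow_le_pow_left₀ hs.le hge 2) hα0.le)
    have hP : K < 4 * α ^ 2 * ‖x₀ - y‖ ^ 2 * (4 * α ^ 2 * ‖x₀ - y‖ ^ 2 - 2 * α) := by
      exact aux_P α K _ hα1 hαK hq
    have h1 := mul_lt_mul_of_pos_right hP hE3
    have h2 := mul_le_mul_of_nonneg_left huE hK0
    linarith
  refine ⟨1, one_pos, r / 4, by positivity, fun x hx => (hrΩ x ?_).1, fun x hx => ?_⟩
  · exact ball_subset_ball (by linarith) hx
  · exact (key x hx).trans (by positivity)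
end
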